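/- Let an LBUBFL instance with uniform bounds be given, let (x*, y*) be a feasible fractional LP solution, and let ℓ ≥ 2 be real. Then there exist x̄ : F → C → ℝ with x̄ i j ≥ 0 and ȳ : F → ℝ with ȳ i ∈ {0,1} for every i, such that: Σ_{i∈F} x̄ i j ≥ 1 for every j ∈ C; (1 − 1/ℓ)·L·ȳ i ≤ Σ_{j∈C} x̄ i j ≤ (2 − 1/ℓ)·U·ȳ i for every i ∈ F; and Σ_{i∈F} f i · ȳ i + Σ_{i∈F} Σ_{j∈C} dist(i,j) · x̄ i j ≤ (10ℓ + 4)·LPcost(x*, y*). -/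

import Mathlib

/-!
Give every client the radius `ℓ` times its average distance in the linear program and choose
centers among the clients greedily, smallest radius first, so that their balls are disjoint. By
Markov's inequality facilities of total opening at least `a = 1 - 1 / ℓ` lie in the ball of each
center. Assign all facilities to their nearest center and round each cluster separately. If the
load of a cluster is at most `(1 + a) * U`, open only the cheapest facility in the ball of the
center. Otherwise minimise the cost over all fractional openings that preserve the load of the
cluster: a vertex of this knapsack polytope has at most one fractional facility, which is opened if
its extent is at least `a` and closed otherwise, at the price of scaling the remaining loads by at
most `1 + a`. Finally the clients are rerouted to the new loads through the center of the cluster.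
-/

open scoped Topology

section Knapsack

theorem exists_mem_extremePoints_forall_le {E : Type*} [AddCommGroup E] [Module ℝ E]
    [TopologicalSpace E] [T2Space E] [IsTopologicalAddGroup E] [ContinuousSMul ℝ E]
    [LocallyConvexSpace ℝ E] {s : Set E} (hs : IsCompact s) (hne : s.Nonempty)
    (l : StrongDual ℝ E) : ∃ x ∈ s.extremePoints ℝ, ∀ y ∈ s, l x ≤ l y := by
  have hface : IsExposed ℝ s ((-l).toExposed s) := ContinuousLinearMap.toExposed.isExposed
  obtain ⟨x₀, hx₀, hmin⟩ := hs.exists_isMinOn hne l.continuous.continuousOn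
  have hface_ne : ((-l).toExposed s).Nonempty := ⟨x₀, hx₀, fun y hy => neg_le_neg (hmin hy)⟩
  obtain ⟨x, hx⟩ := (hface.isCompact hs).extremePoints_nonempty hface_ne
  exact ⟨x, hface.isExtreme.extremePoints_subset_extremePoints hx,
    fun y hy => neg_le_neg_iff.1 (hx.1.2 y hy)⟩

variable {ι : Type*} [Fintype ι]

theorem exists_ne_zero_sum_mul_eq_zero (r : ι → ℝ) {p q : ι} (hpq : p ≠ q) :
    ∃ d : ι → ℝ, d ≠ 0 ∧ (∀ i, i ≠ p → i ≠ q → d i = 0) ∧ ∑ i, r i * d i = 0 := by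
  classical
  by_cases hp : r p = 0
  · exact ⟨Pi.single p 1, by simp, fun i hip _ => by simp [hip], by simp [Pi.single_apply, hp]⟩
  · refine ⟨Pi.single p (r q) - Pi.single q (r p), fun h => hp ?_, fun i hip hiq => by
      simp [hip, hiq], ?_⟩
    · simpa [hpq.symm] using congrFun h q
    · simp [Pi.single_apply, mul_sub, Finset.sum_sub_distrib, mul_comm]

theorem subsingleton_fractional_of_mem_extremePoints {r z : ι → ℝ} {b : ℝ}
    (hz : z ∈ (Set.Icc 0 1 ∩ {v : ι → ℝ | ∑ i, r i * v i = b}).extremePoints ℝ) :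
    {i | z i ∈ Set.Ioo 0 1}.Subsingleton := by
  obtain ⟨⟨hz01, hzb⟩, hext⟩ := mem_extremePoints_iff_left.1 hz
  intro p hp q hq
  by_contra hpq
  obtain ⟨d, hd0, hdsupp, hrd⟩ := exists_ne_zero_sum_mul_eq_zero r hpq
  have hnear : ∀ᶠ t in 𝓝 (0 : ℝ), z + t • d ∈ Set.Icc 0 1 := by
    have hcoord : ∀ i, ∀ᶠ t in 𝓝 (0 : ℝ), z i + t * d i ∈ Set.Icc 0 1 := fun i => by
      by_cases hi : z i ∈ Set.Ioo 0 1
      · have hcont : Continuous fun t : ℝ => z i + t * d i := by fun_prop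
        filter_upwards [hcont.continuousAt.eventually_mem (x := 0)
          (by simpa using Ioo_mem_nhds hi.1 hi.2)] with t ht using Set.Ioo_subset_Icc_self ht
      · have hdi : d i = 0 := hdsupp i (fun h => hi (h ▸ hp)) fun h => hi (h ▸ hq)
        simpa [hdi] using ⟨hz01.1 i, hz01.2 i⟩
    filter_upwards [Filter.eventually_all.2 hcoord] with t ht
    exact ⟨fun i => (ht i).1, fun i => (ht i).2⟩
  have hnear_neg : ∀ᶠ t in 𝓝 (0 : ℝ), z + (-t) • d ∈ Set.Icc 0 1 :=
    (continuous_neg.tendsto' 0 0 neg_zero).eventually hnear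
  have hline : ∀ t : ℝ, ∑ i, r i * (z + t • d) i = b := fun t => by
    simp only [Pi.add_apply, Pi.smul_apply, smul_eq_mul, mul_add, Finset.sum_add_distrib,
      mul_left_comm _ t, ← Finset.mul_sum, hrd, mul_zero, add_zero]
    exact hzb
  obtain ⟨t, ⟨hpos, hneg⟩, ht0 : t ≠ 0⟩ :=
    (((hnear.and hnear_neg).filter_mono nhdsWithin_le_nhds).and
      (self_mem_nhdsWithin (a := (0 : ℝ)) (s := {0}ᶜ))).exists
  have hmid : z ∈ openSegment ℝ (z + t • d) (z + (-t) • d) :=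
    ⟨1 / 2, 1 / 2, by norm_num, by norm_num, by norm_num, by module⟩
  have := hext _ ⟨hpos, hline t⟩ _ ⟨hneg, hline (-t)⟩ hmid
  simp [ht0, hd0] at this

theorem exists_knapsack_subsingleton_fractional (r g : ι → ℝ) {z : ι → ℝ}
    (hz : z ∈ Set.Icc 0 1) :
    ∃ v ∈ Set.Icc (0 : ι → ℝ) 1, ∑ i, r i * v i = ∑ i, r i * z i ∧
      ∑ i, g i * v i ≤ ∑ i, g i * z i ∧ {i | v i ∈ Set.Ioo 0 1}.Subsingleton := by
  have hclosed : IsClosed {v : ι → ℝ | ∑ i, r i * v i = ∑ i, r i * z i} :=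
    isClosed_eq (by fun_prop) continuous_const
  obtain ⟨v, hv, hmin⟩ := exists_mem_extremePoints_forall_le (isCompact_Icc.inter_right hclosed)
    ⟨z, hz, rfl⟩ (∑ i, g i • ContinuousLinearMap.proj (R := ℝ) (φ := fun _ : ι => ℝ) i)
  refine ⟨v, hv.1.1, hv.1.2, ?_, subsingleton_fractional_of_mem_extremePoints hv⟩
  simpa using hmin z ⟨hz, rfl⟩

end Knapsack

section Rounding

/-- `IsRounding lo hi w w' ybar`: a redistribution `w'` of the facility loads `w` in which each
facility is either closed and unused (`ybar i = 0`) or open (`ybar i = 1`) with load in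
`[lo, hi]`. -/
structure IsRounding {ι : Type*} [Fintype ι] (lo hi : ℝ) (w w' ybar : ι → ℝ) : Prop where
  zero_or_one : ∀ i, ybar i = 0 ∨ ybar i = 1
  sum_eq : ∑ i, w' i = ∑ i, w i
  lower : ∀ i, lo * ybar i ≤ w' i
  upper : ∀ i, w' i ≤ hi * ybar i

theorem exists_mem_mul_sum_le_sum_mul {ι : Type*} {B : Finset ι} {y : ι → ℝ} (f : ι → ℝ)
    (hB : B.Nonempty) (hy : 0 ≤ y) :
    ∃ i ∈ B, f i * ∑ i' ∈ B, y i' ≤ ∑ i' ∈ B, f i' * y i' := by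
  obtain ⟨i, hi, hmin⟩ := B.exists_min_image f hB
  refine ⟨i, hi, ?_⟩
  rw [Finset.mul_sum]
  exact Finset.sum_le_sum fun i' hi' => mul_le_mul_of_nonneg_right (hmin i' hi') (hy i')

variable {ι : Type*} [Fintype ι] {a L U : ℝ} {f D w y : ι → ℝ}

theorem sum_le_of_subsingleton_ne_zero {g : ι → ℝ} {M : ℝ} (hM : 0 ≤ M) (hg : ∀ i, g i ≤ M)
    (hsub : {i | g i ≠ 0}.Subsingleton) : ∑ i, g i ≤ M := by
  by_cases h : ∃ p, g p ≠ 0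
  · obtain ⟨p, hp⟩ := h
    have hzero : ∀ i, i ≠ p → g i = 0 := fun i hi => by_contra fun hgi => hi (hsub hgi hp)
    rw [Fintype.sum_eq_single p hzero]
    exact hg p
  · push Not at h
    simpa [h] using hM

theorem sum_filter_lt_mul_le {r z : ι → ℝ} (ha₀ : 0 ≤ a) (ha₁ : a ≤ 1) (hU : 0 ≤ U)
    (hr : ∀ i, r i ≤ U) (hz : 0 ≤ z) (hfrac : {i | z i ∈ Set.Ioo 0 1}.Subsingleton) :
    ∑ i with z i < a, r i * z i ≤ a * U := by
  rw [Finset.sum_filter]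
  refine sum_le_of_subsingleton_ne_zero (by positivity) (fun i => ?_) (hfrac.anti fun i hi => ?_)
  · split_ifs with hi
    · calc r i * z i ≤ U * a := mul_le_mul (hr i) hi.le (hz i) hU
        _ = a * U := mul_comm U a
    · positivity
  · rw [Set.mem_ofPred_eq, ite_ne_right_iff] at hi
    exact ⟨(hz i).lt_of_ne' (right_ne_zero_of_mul hi.2), hi.1.trans_le ha₁⟩

theorem sum_mul_le_one_add_mul_sum_filter {r z : ι → ℝ} (ha₀ : 0 ≤ a) (ha₁ : a ≤ 1) (hU : 0 ≤ U)
    (hr : ∀ i, r i ≤ U) (hz : 0 ≤ z) (hfrac : {i | z i ∈ Set.Ioo 0 1}.Subsingleton)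
    (hload : (1 + a) * U ≤ ∑ i, r i * z i) :
    ∑ i, r i * z i ≤ (1 + a) * ∑ i with a ≤ z i, r i * z i := by
  have hsplit : ∑ i with a ≤ z i, r i * z i + ∑ i with z i < a, r i * z i = ∑ i, r i * z i := by
    simpa only [not_le] using Finset.sum_filter_add_sum_filter_not _ (fun i => a ≤ z i) _
  have hlost := sum_filter_lt_mul_le ha₀ ha₁ hU hr hz hfrac
  rw [eq_sub_of_add_eq hsplit]
  linarith [mul_le_mul_of_nonneg_left hload ha₀, mul_le_mul_of_nonneg_left hlost ha₀]

-- Facilities opened to an extent below `a` are closed and the loads of the others scaled up.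
-- At most one closed facility had positive load, namely at most `a * U`, which bounds the scaling
-- factor by `1 + a`.
theorem exists_isRounding_of_subsingleton_fractional {r z : ι → ℝ} (ha₀ : 0 ≤ a) (ha₁ : a ≤ 1)
    (hL : 0 ≤ L) (hLU : L ≤ U) (hrL : ∀ i, L ≤ r i) (hrU : ∀ i, r i ≤ U) (hz : z ∈ Set.Icc 0 1)
    (hfrac : {i | z i ∈ Set.Ioo 0 1}.Subsingleton) (hload : (1 + a) * U < ∑ i, r i * z i) :
    ∃ w' ybar : ι → ℝ,
      IsRounding (a * L) ((1 + a) * U) (fun i => r i * z i) w' ybar ∧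
      (∀ i, a * ybar i ≤ z i) ∧ ∀ i, w' i ≤ (1 + a) * (r i * z i) := by
  classical
  have hU : 0 ≤ U := hL.trans hLU
  have hr₀ : ∀ i, 0 ≤ r i := fun i => hL.trans (hrL i)
  have hrz₀ : ∀ i, 0 ≤ r i * z i := fun i => mul_nonneg (hr₀ i) (hz.1 i)
  set W := ∑ i, r i * z i
  set T := ∑ i with a ≤ z i, r i * z i
  have hWT : W ≤ (1 + a) * T :=
    sum_mul_le_one_add_mul_sum_filter ha₀ ha₁ hU hrU hz.1 hfrac hload.le
  have hTpos : 0 < T := by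
    have hW : 0 < W := lt_of_le_of_lt (by positivity) hload
    exact pos_of_mul_pos_right (hW.trans_le hWT) (by positivity)
  have hscale₁ : 1 ≤ W / T := (one_le_div hTpos).2 (Finset.sum_le_univ_sum_of_nonneg hrz₀)
  have hscale₂ : W / T ≤ 1 + a := (div_le_iff₀ hTpos).2 hWT
  refine ⟨fun i => if a ≤ z i then W / T * (r i * z i) else 0, fun i => if a ≤ z i then 1 else 0,
    ⟨fun i => ?_, ?_, fun i => ?_, fun i => ?_⟩, fun i => ?_, fun i => ?_⟩
  · split_ifs <;> simp
  · rw [← Finset.sum_filter, ← Finset.mul_sum, div_mul_cancel₀ _ hTpos.ne']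
  · split_ifs with hi
    · calc a * L * 1 = L * a := by ring
        _ ≤ r i * z i := mul_le_mul (hrL i) hi ha₀ (hr₀ i)
        _ ≤ W / T * (r i * z i) := le_mul_of_one_le_left (hrz₀ i) hscale₁
    · simp
  · split_ifs
    · have hrzU : r i * z i ≤ U := (mul_le_of_le_one_right (hr₀ i) (hz.2 i)).trans (hrU i)
      calc W / T * (r i * z i) ≤ (1 + a) * U := mul_le_mul hscale₂ hrzU (hrz₀ i) (by positivity)
        _ = (1 + a) * U * 1 := (mul_one _).symm
    · simp
  · dsimp only
    split_ifs with hi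
    · simpa using hi
    · simpa using hz.1 i
  · dsimp only
    split_ifs
    · exact mul_le_mul_of_nonneg_right hscale₂ (hrz₀ i)
    · exact mul_nonneg (by positivity) (hrz₀ i)

theorem exists_mem_Icc_mul_eq {w y : ℝ} (hLU : L ≤ U) (hy : 0 ≤ y) (hlb : L * y ≤ w)
    (hub : w ≤ U * y) : ∃ r ∈ Set.Icc L U, r * y = w := by
  rcases hy.eq_or_lt' with rfl | hy
  · exact ⟨L, ⟨le_rfl, hLU⟩, by linarith⟩
  · exact ⟨w / y, ⟨(le_div_iff₀ hy).2 hlb, (div_le_iff₀ hy).2 hub⟩, div_mul_cancel₀ w hy.ne'⟩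

theorem exists_isRounding_of_lt_sum (ha : a ∈ Set.Icc (1 / 2) 1) (hL : 0 ≤ L) (hLU : L ≤ U)
    (hy : y ∈ Set.Icc 0 1) (hlb : ∀ i, L * y i ≤ w i) (hub : ∀ i, w i ≤ U * y i)
    (hf : 0 ≤ f) (hD : 0 ≤ D) (hload : (1 + a) * U < ∑ i, w i) :
    ∃ w' ybar : ι → ℝ, IsRounding (a * L) ((1 + a) * U) w w' ybar ∧
      ∑ i, f i * ybar i + ∑ i, w' i * D i ≤ 2 * (∑ i, f i * y i + ∑ i, w i * D i) := by
  obtain ⟨ha_half, ha₁⟩ := ha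
  choose r hr hry using fun i => exists_mem_Icc_mul_eq hLU (hy.1 i) (hlb i) (hub i)
  obtain ⟨z, hz, hsum, hcost, hfrac⟩ :=
    exists_knapsack_subsingleton_fractional r (fun i => f i + r i * D i) hy
  simp only [hry] at hsum
  obtain ⟨w', ybar, hround, hybar, hw'⟩ := exists_isRounding_of_subsingleton_fractional
    (by linarith) ha₁ hL hLU (fun i => (hr i).1) (fun i => (hr i).2) hz hfrac (hsum ▸ hload)
  refine ⟨w', ybar, { hround with sum_eq := hround.sum_eq.trans hsum }, ?_⟩
  have hterm : ∀ i, f i * ybar i + w' i * D i ≤ 2 * ((f i + r i * D i) * z i) := fun i => by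
    have hopen : ybar i ≤ 2 * z i := by
      have hz₀ : 0 ≤ z i := hz.1 i
      have hopen := hybar i
      rcases hround.zero_or_one i with h | h <;> rw [h] at hopen ⊢ <;> linarith
    have hload : w' i ≤ 2 * (r i * z i) :=
      (hw' i).trans (mul_le_mul_of_nonneg_right (by linarith)
        (mul_nonneg (hL.trans (hr i).1) (hz.1 i)))
    calc f i * ybar i + w' i * D i ≤ f i * (2 * z i) + 2 * (r i * z i) * D i :=
          add_le_add (mul_le_mul_of_nonneg_left hopen (hf i))
            (mul_le_mul_of_nonneg_right hload (hD i))
      _ = 2 * ((f i + r i * D i) * z i) := by ring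
  calc ∑ i, f i * ybar i + ∑ i, w' i * D i ≤ 2 * ∑ i, (f i + r i * D i) * z i := by
        rw [← Finset.sum_add_distrib, Finset.mul_sum]
        exact Finset.sum_le_sum fun i _ => hterm i
    _ ≤ 2 * ∑ i, (f i + r i * D i) * y i := by linarith
    _ = 2 * (∑ i, f i * y i + ∑ i, w i * D i) := by
        simp only [← hry, ← Finset.sum_add_distrib, add_mul, mul_right_comm]

theorem exists_isRounding_of_sum_mem_Icc {lo hi ρ : ℝ} {B : Finset ι} (hy : 0 ≤ y) (hf : 0 ≤ f)
    (hB : 1 / 2 ≤ ∑ i ∈ B, y i) (hDB : ∀ i ∈ B, D i ≤ ρ) (hlo : 0 ≤ lo)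
    (hload : ∑ i, w i ∈ Set.Icc lo hi) :
    ∃ w' ybar : ι → ℝ, IsRounding lo hi w w' ybar ∧
      ∑ i, f i * ybar i + ∑ i, w' i * D i ≤ 2 * ∑ i, f i * y i + (∑ i, w i) * ρ := by
  classical
  have hB_ne : B.Nonempty := Finset.nonempty_of_sum_ne_zero (f := y) (by linarith)
  obtain ⟨p, hpB, hp⟩ := exists_mem_mul_sum_le_sum_mul f hB_ne hy
  refine ⟨Pi.single p (∑ i, w i), Pi.single p 1, ⟨fun i => ?_, ?_, fun i => ?_, fun i => ?_⟩, ?_⟩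
  · by_cases hi : i = p <;> simp [hi]
  · simp
  · by_cases hi : i = p <;> simp [hi, hload.1]
  · by_cases hi : i = p <;> simp [hi, hload.2]
  · have hopen : f p ≤ 2 * ∑ i, f i * y i := by
      have hsub : ∑ i ∈ B, f i * y i ≤ ∑ i, f i * y i :=
        Finset.sum_le_univ_sum_of_nonneg fun i => mul_nonneg (hf i) (hy i)
      linarith [mul_le_mul_of_nonneg_left hB (hf p)]
    have hconn : (∑ i, w i) * D p ≤ (∑ i, w i) * ρ :=
      mul_le_mul_of_nonneg_left (hDB p hpB) (hlo.trans hload.1)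
    simpa [Pi.single_apply] using add_le_add hopen hconn

theorem exists_isRounding {ρ M : ℝ} {B : Finset ι} (ha : a ∈ Set.Icc (1 / 2) 1) (hL : 0 ≤ L)
    (hLU : L ≤ U) (hy : y ∈ Set.Icc 0 1) (hlb : ∀ i, L * y i ≤ w i) (hub : ∀ i, w i ≤ U * y i)
    (hf : 0 ≤ f) (hD : 0 ≤ D) (hB : a ≤ ∑ i ∈ B, y i) (hDB : ∀ i ∈ B, D i ≤ ρ)
    (hwD : ∑ i, w i * D i ≤ M) (hwρ : (∑ i, w i) * ρ ≤ M) :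
    ∃ w' ybar : ι → ℝ, IsRounding (a * L) ((1 + a) * U) w w' ybar ∧
      ∑ i, f i * ybar i + ∑ i, w' i * D i ≤ 2 * (∑ i, f i * y i + M) := by
  rcases lt_or_ge ((1 + a) * U) (∑ i, w i) with hlarge | hsmall
  · obtain ⟨w', ybar, hround, hcost⟩ :=
      exists_isRounding_of_lt_sum ha hL hLU hy hlb hub hf hD hlarge
    exact ⟨w', ybar, hround, by linarith⟩
  · have hload : a * L ≤ ∑ i, w i :=
      calc a * L ≤ (∑ i, y i) * L :=
            mul_le_mul_of_nonneg_right (hB.trans (Finset.sum_le_univ_sum_of_nonneg hy.1)) hL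
        _ = ∑ i, L * y i := by rw [mul_comm, Finset.mul_sum]
        _ ≤ ∑ i, w i := Finset.sum_le_sum fun i _ => hlb i
    obtain ⟨w', ybar, hround, hcost⟩ := exists_isRounding_of_sum_mem_Icc hy.1 hf (ha.1.trans hB)
      hDB (mul_nonneg (by linarith [ha.1]) hL) ⟨hload, hsmall⟩
    have hM : 0 ≤ M := (Finset.sum_nonneg fun i _ => mul_nonneg
      ((mul_nonneg hL (hy.1 i)).trans (hlb i)) (hD i)).trans hwD
    exact ⟨w', ybar, hround, by linarith⟩

theorem exists_isRounding_fiberwise {τ : Type*} [Fintype τ] [DecidableEq τ] (ctr : ι → τ)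
    {lo hi : ℝ} {M : τ → ℝ}
    (h : ∀ k, ∃ w' ybar : {i // ctr i = k} → ℝ,
      IsRounding lo hi (fun i : {i // ctr i = k} => w i) w' ybar ∧
      ∑ i : {i // ctr i = k}, f i * ybar i + ∑ i : {i // ctr i = k}, w' i * D i ≤ M k) :
    ∃ w' ybar : ι → ℝ,
      (∀ k, IsRounding lo hi (fun i : {i // ctr i = k} => w i) (fun i => w' i)
        fun i => ybar i) ∧
      ∑ i, f i * ybar i + ∑ i, w' i * D i ≤ ∑ k, M k := by
  choose w' ybar hround hcost using h
  have hglue : ∀ (u : ∀ k, {i // ctr i = k} → ℝ) (k : τ),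
      (fun i : {i // ctr i = k} => u (ctr i) ⟨i, rfl⟩) = u k := by
    rintro u k
    ext ⟨i, rfl⟩
    rfl
  refine ⟨fun i => w' (ctr i) ⟨i, rfl⟩, fun i => ybar (ctr i) ⟨i, rfl⟩, fun k => ?_, ?_⟩
  · rw [hglue w', hglue ybar]
    exact hround k
  · rw [← Finset.sum_add_distrib, ← Fintype.sum_fiberwise ctr]
    refine Finset.sum_le_sum fun k _ => ?_
    rw [Finset.sum_add_distrib]
    have hcost_k := hcost k
    rwa [← hglue ybar k, ← hglue w' k] at hcost_k

end Rounding

section Clustering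

/-- The facilities located by `p` are assigned to centers among the clients located by `q`, where
client `j` tolerates the radius `r j`: for any client `j`, both the distance of a facility `i` to
its center and the radius of that center are at most `dist (p i) (q j) + 2 * r j`, and the
facilities within the radius of a center belong to it. -/
structure IsClustering {X ι κ : Type*} [PseudoMetricSpace X] (p : ι → X) (q : κ → X) (r : κ → ℝ)
    {K : Finset κ} (ctr : ι → K) : Prop where
  dist_center_le : ∀ i j, dist (p i) (q (ctr i)) ≤ dist (p i) (q j) + 2 * r j
  radius_center_le : ∀ i j, r (ctr i) ≤ dist (p i) (q j) + 2 * r j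
  center_eq_of_dist_le : ∀ i (k : K), dist (p i) (q k) ≤ r k → ctr i = k

variable {X ι κ : Type*} [PseudoMetricSpace X]

theorem exists_separated_net (q : κ → X) {R : κ → ℝ} (hR : 0 ≤ R) (s : Finset κ) :
    ∃ K ⊆ s, (K : Set κ).Pairwise (fun j k => R j < dist (q j) (q k)) ∧
      ∀ j ∈ s, ∃ k ∈ K, dist (q j) (q k) ≤ R j ∧ R k ≤ R j := by
  classical
  induction s using Finset.induction_on_max_value R with
  | empty => exact ⟨∅, by simp⟩
  | insert a s _ hmax ih =>
    obtain ⟨K, hKs, hsep, hcover⟩ := ih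
    by_cases hnear : ∃ k ∈ K, dist (q a) (q k) ≤ R a
    · obtain ⟨k, hk, hak⟩ := hnear
      refine ⟨K, hKs.trans (Finset.subset_insert a s), hsep, ?_⟩
      exact Finset.forall_mem_insert .. |>.2 ⟨⟨k, hk, hak, hmax k (hKs hk)⟩, hcover⟩
    · push Not at hnear
      refine ⟨insert a K, Finset.insert_subset_insert a hKs, ?_, ?_⟩
      · rw [Finset.coe_insert]
        refine hsep.insert fun k hk _ => ⟨hnear k hk, ?_⟩
        rw [dist_comm]
        exact (hmax k (hKs hk)).trans_lt (hnear k hk)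
      · refine Finset.forall_mem_insert .. |>.2
          ⟨⟨a, Finset.mem_insert_self a K, by simpa using hR a, le_rfl⟩, fun j hj => ?_⟩
        obtain ⟨k, hk, hjk⟩ := hcover j hj
        exact ⟨k, Finset.mem_insert_of_mem hk, hjk⟩

theorem exists_isClustering [Finite κ] [Nonempty κ] (p : ι → X) (q : κ → X) {r : κ → ℝ}
    (hr : 0 ≤ r) : ∃ (K : Finset κ) (ctr : ι → K), IsClustering p q r ctr := by
  have := Fintype.ofFinite κ
  obtain ⟨K, -, hsep, hcover⟩ :=
    exists_separated_net q (R := fun j => 2 * r j) (fun j => mul_nonneg zero_le_two (hr j))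
      Finset.univ
  have hK : K.attach.Nonempty := by
    obtain ⟨k, hk, -⟩ := hcover (Classical.arbitrary κ) (Finset.mem_univ _)
    exact ⟨⟨k, hk⟩, Finset.mem_attach _ _⟩
  choose ctr _ hctr using fun i => K.attach.exists_min_image (fun k => dist (p i) (q k)) hK
  have hnearest : ∀ i (k : K), dist (p i) (q (ctr i)) ≤ dist (p i) (q k) :=
    fun i k => hctr i k (Finset.mem_attach K k)
  have hsep' : ∀ {k k' : K}, k ≠ k' → 2 * r k < dist (q k) (q k') :=
    fun {k k'} hne => hsep k.2 k'.2 (Subtype.coe_ne_coe.2 hne)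
  refine ⟨K, ctr, fun i j => ?_, fun i j => ?_, fun i k hik => ?_⟩
  · obtain ⟨k, hk, hjk, -⟩ := hcover j (Finset.mem_univ j)
    linarith [hnearest i ⟨k, hk⟩, dist_triangle (p i) (q j) (q k)]
  · obtain ⟨k, hk, hjk, hkj⟩ := hcover j (Finset.mem_univ j)
    rcases eq_or_ne (ctr i) ⟨k, hk⟩ with h | h
    · have hrj : 0 ≤ r j := hr j
      rw [h]
      linarith [dist_nonneg (x := p i) (y := q j)]
    · linarith [hsep' h, hnearest i ⟨k, hk⟩, dist_triangle (p i) (q j) (q k),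
        dist_triangle_left (q (ctr i)) (q k) (p i)]
  · by_contra h
    linarith [hsep' (Ne.symm h), hnearest i k, dist_triangle_left (q k) (q (ctr i)) (p i)]

end Clustering

section Rerouting

variable {X ι κ τ : Type*} [PseudoMetricSpace X] [Fintype ι] [Fintype κ]

/-- The cost of serving the clients located by `q` from the facilities located by `p`, when
facility `i` serves the fraction `x i j` of client `j`. -/
def connectionCost (p : ι → X) (q : κ → X) (x : ι → κ → ℝ) : ℝ :=
  ∑ i, ∑ j, dist (p i) (q j) * x i j

theorem exists_fiberwise_kernel [DecidableEq τ] (ctr : ι → τ) {w w' : ι → ℝ} (hw' : 0 ≤ w')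
    (hpos : ∀ k, 0 < ∑ i : {i // ctr i = k}, w i)
    (hsum : ∀ k, ∑ i : {i // ctr i = k}, w' i = ∑ i : {i // ctr i = k}, w i) :
    ∃ P : ι → ι → ℝ, (∀ i i', 0 ≤ P i i') ∧ (∀ i i', P i i' ≠ 0 → ctr i = ctr i') ∧
      (∀ i, ∑ i', P i i' = 1) ∧ ∀ i', ∑ i, w i * P i i' = w' i' := by
  have hfiber : ∀ (g : ι → ℝ) (k : τ),
      ∑ i : {i // ctr i = k}, g i = ∑ i, if ctr i = k then g i else 0 := fun g k => by
    rw [← Finset.sum_filter]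
    exact (Finset.sum_subtype _ (by simp) g).symm
  set W : τ → ℝ := fun k => ∑ i : {i // ctr i = k}, w i
  refine ⟨fun i i' => if ctr i' = ctr i then w' i' / W (ctr i) else 0, fun i i' => ?_,
    fun i i' h => (ite_ne_right_iff.1 h).1.symm, fun i => ?_, fun i' => ?_⟩
  · dsimp only
    split_ifs
    exacts [div_nonneg (hw' i') (hpos _).le, le_rfl]
  · rw [← hfiber (fun i' => w' i' / W (ctr i)), ← Finset.sum_div, hsum, div_self (hpos _).ne']
  · calc ∑ i, w i * (if ctr i' = ctr i then w' i' / W (ctr i) else 0)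
        = ∑ i, (if ctr i = ctr i' then w i else 0) * (w' i' / W (ctr i')) :=
          Finset.sum_congr rfl fun i _ => by
            by_cases h : ctr i = ctr i'
            · simp [h]
            · simp [h, Ne.symm h]
      _ = W (ctr i') * (w' i' / W (ctr i')) := by rw [← Finset.sum_mul, ← hfiber]
      _ = w' i' := mul_div_cancel₀ _ (hpos _).ne'

theorem connectionCost_comp_kernel_le (p : ι → X) (q : κ → X) (ctr : ι → τ) (c : τ → X)
    {x : ι → κ → ℝ} {P : ι → ι → ℝ} (hx : ∀ i j, 0 ≤ x i j) (hP : ∀ i i', 0 ≤ P i i')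
    (hctr : ∀ i i', P i i' ≠ 0 → ctr i = ctr i') (hP1 : ∀ i, ∑ i', P i i' = 1) :
    connectionCost p q (fun i' j => ∑ i, x i j * P i i') ≤
      connectionCost p q x + ∑ i, (∑ j, x i j) * dist (p i) (c (ctr i)) +
        ∑ i', (∑ i, (∑ j, x i j) * P i i') * dist (p i') (c (ctr i')) := by
  have hterm : ∀ i' j i, dist (p i') (q j) * (x i j * P i i') ≤
      (dist (p i) (q j) * x i j + x i j * dist (p i) (c (ctr i))) * P i i' +
        x i j * P i i' * dist (p i') (c (ctr i')) := fun i' j i => by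
    by_cases h : P i i' = 0
    · simp [h]
    · have htri := dist_triangle4 (p i') (c (ctr i')) (p i) (q j)
      rw [dist_comm _ (p i), ← hctr i i' h] at htri
      have := mul_le_mul_of_nonneg_right htri (mul_nonneg (hx i j) (hP i i'))
      rw [← hctr i i' h]
      linarith
  calc connectionCost p q (fun i' j => ∑ i, x i j * P i i')
      = ∑ i', ∑ j, ∑ i, dist (p i') (q j) * (x i j * P i i') := by
        simp only [connectionCost, Finset.mul_sum]
    _ ≤ ∑ i', ∑ j, ∑ i, ((dist (p i) (q j) * x i j + x i j * dist (p i) (c (ctr i))) * P i i' +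
          x i j * P i i' * dist (p i') (c (ctr i'))) :=
        Finset.sum_le_sum fun i' _ => Finset.sum_le_sum fun j _ => Finset.sum_le_sum fun i _ =>
          hterm i' j i
    _ = ∑ i, ∑ j, (dist (p i) (q j) * x i j + x i j * dist (p i) (c (ctr i))) * ∑ i', P i i' +
          ∑ i', (∑ i, (∑ j, x i j) * P i i') * dist (p i') (c (ctr i')) := by
        simp only [Finset.sum_add_distrib, Finset.mul_sum, Finset.sum_mul]
        congr 1
        · rw [Finset.sum_comm_cycle]
          exact Finset.sum_congr rfl fun i _ => Finset.sum_comm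
        · exact Finset.sum_congr rfl fun i' _ => Finset.sum_comm
    _ = _ := by
        simp only [hP1, mul_one, Finset.sum_add_distrib, Finset.sum_mul, connectionCost]

theorem exists_rerouting [DecidableEq τ] (p : ι → X) (q : κ → X) (ctr : ι → τ) (c : τ → X)
    {x : ι → κ → ℝ} {w' : ι → ℝ} (hx : ∀ i j, 0 ≤ x i j) (hw' : 0 ≤ w')
    (hpos : ∀ k, 0 < ∑ i : {i // ctr i = k}, ∑ j, x i j)
    (hsum : ∀ k, ∑ i : {i // ctr i = k}, w' i = ∑ i : {i // ctr i = k}, ∑ j, x i j) :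
    ∃ xbar : ι → κ → ℝ, (∀ i j, 0 ≤ xbar i j) ∧ (∀ j, ∑ i, xbar i j = ∑ i, x i j) ∧
      (∀ i, ∑ j, xbar i j = w' i) ∧
      connectionCost p q xbar ≤ connectionCost p q x +
        ∑ i, (∑ j, x i j) * dist (p i) (c (ctr i)) + ∑ i, w' i * dist (p i) (c (ctr i)) := by
  obtain ⟨P, hP, hPctr, hP1, hPw⟩ :=
    exists_fiberwise_kernel ctr (w := fun i => ∑ j, x i j) hw' hpos hsum
  refine ⟨fun i' j => ∑ i, x i j * P i i',
    fun i' j => Finset.sum_nonneg fun i _ => mul_nonneg (hx i j) (hP i i'), fun j => ?_,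
    fun i' => ?_, ?_⟩
  · rw [Finset.sum_comm]
    simp only [← Finset.mul_sum, hP1, mul_one]
  · rw [Finset.sum_comm]
    simp only [← Finset.sum_mul, hPw]
  · simpa only [hPw] using connectionCost_comp_kernel_le p q ctr c hx hP hPctr hP1

end Rerouting

section LinearProgram

theorem one_sub_inv_mul_sum_le_sum_filter {ι : Type*} [Fintype ι] {v g : ι → ℝ} {ℓ c : ℝ}
    (hv : 0 ≤ v) (hg : 0 ≤ g) (hℓ : 0 < ℓ) (hc : 0 ≤ c)
    (hmean : ∑ i, g i * v i = (∑ i, v i) * c) :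
    (1 - 1 / ℓ) * ∑ i, v i ≤ ∑ i with g i ≤ ℓ * c, v i := by
  have hsplit : ∑ i with g i ≤ ℓ * c, v i + ∑ i with ℓ * c < g i, v i = ∑ i, v i := by
    simpa only [not_le] using Finset.sum_filter_add_sum_filter_not _ (fun i => g i ≤ ℓ * c) v
  suffices htail : ∑ i with ℓ * c < g i, v i ≤ 1 / ℓ * ∑ i, v i by linarith
  have hgv : 0 ≤ fun i => g i * v i := fun i => mul_nonneg (hg i) (hv i)
  rcases hc.eq_or_lt' with rfl | hc
  · have hzero : ∀ i, g i * v i = 0 := by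
      simpa [hmean, funext_iff] using Fintype.sum_eq_zero_iff_of_nonneg hgv
    calc ∑ i with ℓ * 0 < g i, v i = 0 :=
          Finset.sum_eq_zero fun i hi => (mul_eq_zero.1 (hzero i)).resolve_left
            (by simpa using (Finset.mem_filter.1 hi).2.ne')
      _ ≤ 1 / ℓ * ∑ i, v i := mul_nonneg (by positivity) (Finset.sum_nonneg fun i _ => hv i)
  · have hmarkov : ℓ * c * ∑ i with ℓ * c < g i, v i ≤ (∑ i, v i) * c :=
      calc ℓ * c * ∑ i with ℓ * c < g i, v i ≤ ∑ i with ℓ * c < g i, g i * v i := by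
            rw [Finset.mul_sum]
            exact Finset.sum_le_sum fun i hi =>
              mul_le_mul_of_nonneg_right (Finset.mem_filter.1 hi).2.le (hv i)
        _ ≤ ∑ i, g i * v i := Finset.sum_le_univ_sum_of_nonneg hgv
        _ = (∑ i, v i) * c := hmean
    rw [one_div_mul_eq_div, le_div_iff₀ hℓ]
    exact le_of_mul_le_mul_right (by linarith) hc

/-- The constraints of the facility location linear program: every client is served, and a facility
opened to the extent `y i` has total load between `L * y i` and `U * y i`. Facilities and clients
are index types, so that the constraints do not mention the metric space. -/
structure IsFractionalSolution {ι κ : Type*} [Fintype ι] [Fintype κ] (L U : ℝ) (x : ι → κ → ℝ)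
    (y : ι → ℝ) : Prop where
  one_le_sum : ∀ j, 1 ≤ ∑ i, x i j
  lower : ∀ i, L * y i ≤ ∑ j, x i j
  upper : ∀ i, ∑ j, x i j ≤ U * y i
  nonneg : ∀ i j, 0 ≤ x i j
  le_opening : ∀ i j, x i j ≤ y i
  opening_mem_Icc : y ∈ Set.Icc 0 1

/-- The average distance that client `j` travels under the fractional assignment `x`; a multiple of
it serves as the radius of `j` in the clustering. It is `0` if `j` is not served at all. -/
noncomputable def avgDist {X ι κ : Type*} [PseudoMetricSpace X] [Fintype ι] (p : ι → X)
    (q : κ → X) (x : ι → κ → ℝ) (j : κ) : ℝ :=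
  (∑ i, dist (p i) (q j) * x i j) / ∑ i, x i j

variable {X ι κ : Type*} [PseudoMetricSpace X] [Fintype ι] {p : ι → X} {q : κ → X}
  {x : ι → κ → ℝ} {y f : ι → ℝ} {L U ℓ : ℝ}

theorem avgDist_nonneg (hx : ∀ i j, 0 ≤ x i j) (j : κ) : 0 ≤ avgDist p q x j :=
  div_nonneg (Finset.sum_nonneg fun i _ => mul_nonneg dist_nonneg (hx i j))
    (Finset.sum_nonneg fun i _ => hx i j)

theorem sum_mul_avgDist {j : κ} (hxj : ∑ i, x i j ≠ 0) :
    (∑ i, x i j) * avgDist p q x j = ∑ i, dist (p i) (q j) * x i j :=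
  mul_div_cancel₀ _ hxj

variable [Fintype κ]

theorem sum_sum_mul_avgDist (hx : ∀ j, ∑ i, x i j ≠ 0) :
    ∑ i, ∑ j, x i j * avgDist p q x j = connectionCost p q x := by
  rw [connectionCost, Finset.sum_comm, Finset.sum_comm (f := fun i j => dist (p i) (q j) * x i j)]
  exact Finset.sum_congr rfl fun j _ => by rw [← Finset.sum_mul, sum_mul_avgDist (hx j)]

theorem sum_sum_mul_dist_add_radius (hx : ∀ j, ∑ i, x i j ≠ 0) :
    ∑ i, ∑ j, x i j * (dist (p i) (q j) + 2 * (ℓ * avgDist p q x j)) =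
      (1 + 2 * ℓ) * connectionCost p q x := by
  calc ∑ i, ∑ j, x i j * (dist (p i) (q j) + 2 * (ℓ * avgDist p q x j))
      = connectionCost p q x + 2 * ℓ * ∑ i, ∑ j, x i j * avgDist p q x j := by
        simp only [connectionCost, Finset.mul_sum, ← Finset.sum_add_distrib]
        exact Finset.sum_congr rfl fun i _ => Finset.sum_congr rfl fun j _ => by ring
    _ = (1 + 2 * ℓ) * connectionCost p q x := by rw [sum_sum_mul_avgDist hx]; ring

namespace IsFractionalSolution

theorem sum_ne_zero (h : IsFractionalSolution L U x y) (j : κ) : ∑ i, x i j ≠ 0 :=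
  (zero_lt_one.trans_le (h.one_le_sum j)).ne'

theorem le_sum_ball (h : IsFractionalSolution L U x y) (p : ι → X) (q : κ → X) (hℓ : 1 ≤ ℓ)
    (k : κ) : 1 - 1 / ℓ ≤ ∑ i with dist (p i) (q k) ≤ ℓ * avgDist p q x k, x i k :=
  calc 1 - 1 / ℓ ≤ (1 - 1 / ℓ) * ∑ i, x i k :=
        le_mul_of_one_le_right (sub_nonneg.2 ((div_le_one (by linarith)).2 hℓ)) (h.one_le_sum k)
    _ ≤ _ := one_sub_inv_mul_sum_le_sum_filter (fun i => h.nonneg i k) (fun _ => dist_nonneg)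
        (by linarith) (avgDist_nonneg h.nonneg k) (sum_mul_avgDist (h.sum_ne_zero k)).symm

variable {K : Finset κ} {ctr : ι → K}

theorem le_sum_ball_fiber [DecidableEq κ] (h : IsFractionalSolution L U x y) (hℓ : 1 ≤ ℓ)
    (hctr : IsClustering p q (fun j => ℓ * avgDist p q x j) ctr) (k : K) :
    1 - 1 / ℓ ≤
      ∑ i ∈ Finset.univ.filter fun i : {i // ctr i = k} => dist (p i) (q k) ≤ ℓ * avgDist p q x k,
        x i k := by
  refine (h.le_sum_ball p q hℓ k).trans_eq ?_
  rw [← Finset.sum_subtype_of_mem (p := fun i => ctr i = k) (fun i => x i k)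
    fun i hi => hctr.center_eq_of_dist_le i k (Finset.mem_filter.1 hi).2]
  exact Finset.sum_congr (by ext; simp) fun _ _ => rfl

theorem sum_fiber_pos [DecidableEq κ] (h : IsFractionalSolution L U x y) (hℓ : 1 < ℓ)
    (hctr : IsClustering p q (fun j => ℓ * avgDist p q x j) ctr) (k : K) :
    0 < ∑ i : {i // ctr i = k}, ∑ j, x i j :=
  calc 0 < 1 - 1 / ℓ := sub_pos.2 ((div_lt_one (by linarith)).2 hℓ)
    _ ≤ ∑ i ∈ Finset.univ.filter fun i : {i // ctr i = k} => dist (p i) (q k) ≤ ℓ * avgDist p q x k,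
          x i k :=
        h.le_sum_ball_fiber hℓ.le hctr k
    _ ≤ ∑ i : {i // ctr i = k}, x i k := Finset.sum_le_univ_sum_of_nonneg fun i => h.nonneg i k
    _ ≤ ∑ i : {i // ctr i = k}, ∑ j, x i j := Finset.sum_le_sum fun i _ =>
        Finset.single_le_sum (f := x i) (fun j _ => h.nonneg i j) (Finset.mem_univ (k : κ))

theorem exists_isRounding_fiber [DecidableEq κ] (h : IsFractionalSolution L U x y) (hL : 0 ≤ L)
    (hLU : L ≤ U) (hf : 0 ≤ f) (hℓ : 2 ≤ ℓ)
    (hctr : IsClustering p q (fun j => ℓ * avgDist p q x j) ctr) (k : K) :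
    ∃ w' ybar : {i // ctr i = k} → ℝ,
      IsRounding ((1 - 1 / ℓ) * L) ((1 + (1 - 1 / ℓ)) * U)
        (fun i : {i // ctr i = k} => ∑ j, x i j) w' ybar ∧
      ∑ i : {i // ctr i = k}, f i * ybar i +
          ∑ i : {i // ctr i = k}, w' i * dist (p i) (q (ctr i)) ≤
        2 * (∑ i : {i // ctr i = k}, f i * y i + ∑ i : {i // ctr i = k},
          ∑ j, x i j * (dist (p i) (q j) + 2 * (ℓ * avgDist p q x j))) := by
  have ha : 1 - 1 / ℓ ∈ Set.Icc (1 / 2 : ℝ) 1 := by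
    have hinv : 1 / ℓ ≤ 1 / 2 := one_div_le_one_div_of_le two_pos hℓ
    have hinv₀ : 0 ≤ 1 / ℓ := by positivity
    constructor <;> linarith
  refine exists_isRounding (ρ := ℓ * avgDist p q x k)
    (B := {i | dist (p i) (q k) ≤ ℓ * avgDist p q x k}) ha hL hLU
    ⟨fun i => h.opening_mem_Icc.1 i, fun i => h.opening_mem_Icc.2 i⟩ (fun i => h.lower i)
    (fun i => h.upper i) (fun i => hf i) (fun i => dist_nonneg)
    ((h.le_sum_ball_fiber (by linarith) hctr k).trans
      (Finset.sum_le_sum fun i _ => h.le_opening i k)) ?_ ?_ ?_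
  · rintro ⟨i, rfl⟩ hi
    exact (Finset.mem_filter.1 hi).2
  · refine Finset.sum_le_sum fun i _ => ?_
    rw [Finset.sum_mul]
    exact Finset.sum_le_sum fun j _ =>
      mul_le_mul_of_nonneg_left (hctr.dist_center_le i j) (h.nonneg i j)
  · rw [Finset.sum_mul]
    refine Finset.sum_le_sum fun ⟨i, hi⟩ _ => ?_
    rw [Finset.sum_mul]
    exact Finset.sum_le_sum fun j _ =>
      mul_le_mul_of_nonneg_left (hi ▸ hctr.radius_center_le i j) (h.nonneg i j)

theorem exists_isRounding_clusters [DecidableEq κ] (h : IsFractionalSolution L U x y)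
    (hL : 0 ≤ L) (hLU : L ≤ U) (hf : 0 ≤ f) (hℓ : 2 ≤ ℓ)
    (hctr : IsClustering p q (fun j => ℓ * avgDist p q x j) ctr) :
    ∃ w' ybar : ι → ℝ,
      (∀ k, IsRounding ((1 - 1 / ℓ) * L) ((1 + (1 - 1 / ℓ)) * U)
        (fun i : {i // ctr i = k} => ∑ j, x i j) (fun i => w' i) fun i => ybar i) ∧
      ∑ i, f i * ybar i + ∑ i, w' i * dist (p i) (q (ctr i)) ≤
        2 * (∑ i, f i * y i + (1 + 2 * ℓ) * connectionCost p q x) := by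
  obtain ⟨w', ybar, hround, hcost⟩ := exists_isRounding_fiberwise ctr (f := f)
    (D := fun i => dist (p i) (q (ctr i))) (w := fun i => ∑ j, x i j)
    fun k => h.exists_isRounding_fiber hL hLU hf hℓ hctr k
  refine ⟨w', ybar, hround, hcost.trans_eq ?_⟩
  rw [← Finset.mul_sum, Finset.sum_add_distrib, Fintype.sum_fiberwise ctr fun i => f i * y i,
    Fintype.sum_fiberwise ctr fun i => ∑ j, x i j * (dist (p i) (q j) + 2 * (ℓ * avgDist p q x j)),
    sum_sum_mul_dist_add_radius h.sum_ne_zero]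

theorem sum_mul_dist_center_le (h : IsFractionalSolution L U x y)
    (hctr : IsClustering p q (fun j => ℓ * avgDist p q x j) ctr) :
    ∑ i, (∑ j, x i j) * dist (p i) (q (ctr i)) ≤ (1 + 2 * ℓ) * connectionCost p q x := by
  rw [← sum_sum_mul_dist_add_radius h.sum_ne_zero]
  refine Finset.sum_le_sum fun i _ => ?_
  rw [Finset.sum_mul]
  exact Finset.sum_le_sum fun j _ =>
    mul_le_mul_of_nonneg_left (hctr.dist_center_le i j) (h.nonneg i j)

theorem exists_integrally_opened (h : IsFractionalSolution L U x y) (p : ι → X) (q : κ → X)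
    (hL : 0 ≤ L) (hLU : L ≤ U) (hf : 0 ≤ f) (hℓ : 2 ≤ ℓ) :
    ∃ (xbar : ι → κ → ℝ) (ybar : ι → ℝ),
      (∀ i j, 0 ≤ xbar i j) ∧ (∀ i, ybar i = 0 ∨ ybar i = 1) ∧ (∀ j, 1 ≤ ∑ i, xbar i j) ∧
      (∀ i, (1 - 1 / ℓ) * L * ybar i ≤ ∑ j, xbar i j ∧
        ∑ j, xbar i j ≤ (2 - 1 / ℓ) * U * ybar i) ∧
      ∑ i, f i * ybar i + connectionCost p q xbar ≤
        2 * ∑ i, f i * y i + (6 * ℓ + 4) * connectionCost p q x := by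
  classical
  cases isEmpty_or_nonempty κ with
  | inl _ =>
    refine ⟨0, 0, by simp, by simp, by simp, by simp, ?_⟩
    simpa [connectionCost] using
      Finset.sum_nonneg fun i _ => mul_nonneg (hf i) (h.opening_mem_Icc.1 i)
  | inr _ =>
    obtain ⟨K, ctr, hctr⟩ := exists_isClustering p q (r := fun j => ℓ * avgDist p q x j)
      fun j => mul_nonneg (by linarith) (avgDist_nonneg h.nonneg j)
    obtain ⟨w', ybar, hround, hcost⟩ := h.exists_isRounding_clusters hL hLU hf hℓ hctr
    have hybar : ∀ i, ybar i = 0 ∨ ybar i = 1 := fun i => (hround (ctr i)).zero_or_one ⟨i, rfl⟩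
    have hlo : ∀ i, (1 - 1 / ℓ) * L * ybar i ≤ w' i := fun i => (hround (ctr i)).lower ⟨i, rfl⟩
    have hhi : ∀ i, w' i ≤ (1 + (1 - 1 / ℓ)) * U * ybar i :=
      fun i => (hround (ctr i)).upper ⟨i, rfl⟩
    have hw' : 0 ≤ w' := fun i => by
      have ha : 0 ≤ 1 - 1 / ℓ := sub_nonneg.2 ((div_le_one (by linarith)).2 (by linarith))
      refine le_trans (mul_nonneg (mul_nonneg ha hL) ?_) (hlo i)
      rcases hybar i with hi | hi <;> simp [hi]
    obtain ⟨xbar, hxbar, hserved, hload, hconn⟩ := exists_rerouting p q ctr (fun k => q k)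
      h.nonneg hw' (h.sum_fiber_pos (by linarith) hctr) fun k => (hround k).sum_eq
    refine ⟨xbar, ybar, hxbar, hybar, fun j => (h.one_le_sum j).trans_eq (hserved j).symm,
      fun i => ?_, ?_⟩
    · rw [hload i]
      exact ⟨hlo i, (hhi i).trans_eq (by ring)⟩
    · linarith [h.sum_mul_dist_center_le hctr]

end IsFractionalSolution

end LinearProgram

theorem exists_nonneg_extension {α β : Type*} {s : Finset α} {t : Finset β} {g : s → t → ℝ}
    (hg : ∀ i j, 0 ≤ g i j) :
    ∃ g' : α → β → ℝ, (∀ a b, 0 ≤ g' a b) ∧ (fun (i : s) (j : t) => g' i j) = g := by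
  classical
  refine ⟨fun a b => if h : a ∈ s ∧ b ∈ t then g ⟨a, h.1⟩ ⟨b, h.2⟩ else 0, fun a b => ?_,
    by ext; simp⟩
  dsimp only
  split_ifs
  exacts [hg _ _, le_rfl]

theorem integrally_opened_solution_general {X ι κ : Type*} [PseudoMetricSpace X] (p : ι → X)
    (q : κ → X) (F : Finset ι) (C : Finset κ) (f : ι → ℝ) {L U : ℝ} (hf : ∀ i ∈ F, 0 ≤ f i)
    (hL : 0 ≤ L) (hLU : L ≤ U) (x : ι → κ → ℝ) (y : ι → ℝ) (hx1 : ∀ j ∈ C, 1 ≤ ∑ i ∈ F, x i j)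
    (hlb : ∀ i ∈ F, L * y i ≤ ∑ j ∈ C, x i j) (hub : ∀ i ∈ F, ∑ j ∈ C, x i j ≤ U * y i)
    (hx0 : ∀ i ∈ F, ∀ j ∈ C, 0 ≤ x i j) (hxy : ∀ i ∈ F, ∀ j ∈ C, x i j ≤ y i)
    (hy0 : ∀ i ∈ F, 0 ≤ y i) (hy1 : ∀ i ∈ F, y i ≤ 1) {ℓ : ℝ} (hℓ : 2 ≤ ℓ) :
    ∃ (xbar : ι → κ → ℝ) (ybar : ι → ℝ),
      (∀ i j, 0 ≤ xbar i j) ∧ (∀ i ∈ F, ybar i = 0 ∨ ybar i = 1) ∧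
      (∀ j ∈ C, 1 ≤ ∑ i ∈ F, xbar i j) ∧
      (∀ i ∈ F, (1 - 1 / ℓ) * L * ybar i ≤ ∑ j ∈ C, xbar i j ∧
        ∑ j ∈ C, xbar i j ≤ (2 - 1 / ℓ) * U * ybar i) ∧
      ∑ i ∈ F, f i * ybar i + ∑ i ∈ F, ∑ j ∈ C, dist (p i) (q j) * xbar i j ≤
        2 * ∑ i ∈ F, f i * y i + (6 * ℓ + 4) * ∑ i ∈ F, ∑ j ∈ C, dist (p i) (q j) * x i j := by
  simp only [← Finset.sum_coe_sort F, ← Finset.sum_coe_sort C] at hx1 hlb hub ⊢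
  have hsol : IsFractionalSolution L U (fun (i : F) (j : C) => x i j) fun i => y i :=
    { one_le_sum j := hx1 j j.2
      lower i := hlb i i.2
      upper i := hub i i.2
      nonneg i j := hx0 i i.2 j j.2
      le_opening i j := hxy i i.2 j j.2
      opening_mem_Icc := ⟨fun i => hy0 i i.2, fun i => hy1 i i.2⟩ }
  obtain ⟨xbarFC, ybarF, hxbar, hybar, hserved, hload, hcost⟩ :=
    hsol.exists_integrally_opened (f := fun i : F => f i) (fun i => p i) (fun j => q j) hL hLU
      (fun i => hf i i.2) hℓ
  obtain ⟨xbar, hxbar₀, rfl⟩ := exists_nonneg_extension hxbar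
  obtain ⟨ybar, rfl⟩ := Subtype.val_injective.surjective_comp_right ybarF
  exact ⟨xbar, ybar, hxbar₀, fun i hi => hybar ⟨i, hi⟩, fun j hj => hserved ⟨j, hj⟩,
    fun i hi => hload ⟨i, hi⟩, hcost⟩

/-- Integrally opened solution: from a feasible fractional LP solution
`(x*, y*)` of an LBUBFL instance with uniform bounds one obtains a solution `(x̄, ȳ)` with
`ȳ ∈ {0,1}^F` (assignments may stay fractional) serving every client, with loads between
`(1 - 1/ℓ)·L·ȳ i` and `(2 - 1/ℓ)·U·ȳ i`, of cost at most `(10ℓ + 4)` times the LP cost. -/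
theorem integrally_opened_solution
    (X : Type) [MetricSpace X]
    (F C : Finset X) (f : X → ℝ) (L U : ℕ)
    (hf : ∀ i ∈ F, 0 ≤ f i) (hL : 0 < L) (hLU : L ≤ U)
    (x : X → X → ℝ) (y : X → ℝ)
    (hx1 : ∀ j ∈ C, 1 ≤ ∑ i ∈ F, x i j)
    (hlb : ∀ i ∈ F, (L : ℝ) * y i ≤ ∑ j ∈ C, x i j)
    (hub : ∀ i ∈ F, ∑ j ∈ C, x i j ≤ (U : ℝ) * y i)
    (hx0 : ∀ i ∈ F, ∀ j ∈ C, 0 ≤ x i j)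
    (hxy : ∀ i ∈ F, ∀ j ∈ C, x i j ≤ y i)
    (hy1 : ∀ i ∈ F, y i ≤ 1)
    (ℓ : ℝ) (hℓ : 2 ≤ ℓ) :
    ∃ (xbar : X → X → ℝ) (ybar : X → ℝ),
      (∀ i j : X, 0 ≤ xbar i j) ∧
      (∀ i ∈ F, ybar i = 0 ∨ ybar i = 1) ∧
      (∀ j ∈ C, 1 ≤ ∑ i ∈ F, xbar i j) ∧
      (∀ i ∈ F, (1 - 1 / ℓ) * (L : ℝ) * ybar i ≤ ∑ j ∈ C, xbar i j ∧
        ∑ j ∈ C, xbar i j ≤ (2 - 1 / ℓ) * (U : ℝ) * ybar i) ∧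
      ((∑ i ∈ F, f i * ybar i) + ∑ i ∈ F, ∑ j ∈ C, dist i j * xbar i j ≤
        (10 * ℓ + 4) *
          ((∑ i ∈ F, f i * y i) + ∑ i ∈ F, ∑ j ∈ C, dist i j * x i j)) := by
  have hy0 : ∀ i ∈ F, 0 ≤ y i := fun i hi =>
    nonneg_of_mul_nonneg_right ((Finset.sum_nonneg (hx0 i hi)).trans (hub i hi))
      (Nat.cast_pos.2 (hL.trans_le hLU))
  have hfac : 0 ≤ ∑ i ∈ F, f i * y i :=
    Finset.sum_nonneg fun i hi => mul_nonneg (hf i hi) (hy0 i hi)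
  have hconn : 0 ≤ ∑ i ∈ F, ∑ j ∈ C, dist i j * x i j :=
    Finset.sum_nonneg fun i hi => Finset.sum_nonneg fun j hj =>
      mul_nonneg dist_nonneg (hx0 i hi j hj)
  obtain ⟨xbar, ybar, hxbar, hybar, hserved, hload, hcost⟩ :=
    integrally_opened_solution_general id id F C f hf (Nat.cast_nonneg L) (Nat.cast_le.2 hLU) x y
      hx1 hlb hub hx0 hxy hy0 hy1 hℓ
  refine ⟨xbar, ybar, hxbar, hybar, hserved, hload, hcost.trans ?_⟩
  rw [mul_add]
  exact add_le_add (mul_le_mul_of_nonneg_right (by linarith) hfac)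
    (mul_le_mul_of_nonneg_right (by linarith) hconn)
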